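/- Let (X, W) be a left Frobenius pair in A, let C ∈ X̂ and let n ≥ 0. The following are equivalent: (1) resdim_X(C) ≤ n, i.e., C ∈ X̂_n; (2) for every exact sequence 0 → U → X_{n−1} → ⋯ → X_1 → X_0 → C → 0 in A with all X_i ∈ X, one has U ∈ X. -/

import Mathlib

/-!
The implication from right to left only needs truncation and padding of resolutions: given
`M ∈ X̂ₘ`, either `m ≤ n` and the resolution is padded by zeros, or `n ≤ m` and the `n`-th syzygy
of the given resolution lies in `X` by assumption.

The implication from left to right is an induction on `n`, whose step (`hat_kernel`) says: if
`0 → K → E → M → 0` is exact with `E ∈ X` and `M ∈ X̂ₙ₊₁`, then `K ∈ X̂ₙ`. By Auslander–Buchweitz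
approximation (`exists_coapprox`) there is an exact sequence `0 → Q → Y → M → 0` with `Y ∈ X` and
`Q ∈ Ŵₙ`. In the pullback `P` of `E → M ← Y`, the sequence `0 → Q → P → E → 0` splits, because
`Ext¹(E, Q) = 0` by dimension shifting (`ext_vanish`); hence `P ≅ Q ⊕ E ∈ X̂ₙ`. Finally `K` is the
kernel of `P → Y`, and `X̂ₙ` is closed under kernels of epimorphisms onto objects of `X`
(`hat_ker_of_X`).
-/

open CategoryTheory CategoryTheory.Limits CategoryTheory.Abelian ZeroObject

universe w v u

namespace FrobeniusPaper

variable {C : Type u} [Category.{v} C] [Abelian C]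

/-- `f, g` form a short exact sequence `0 → A → B → D → 0` in the abelian category `C`. -/
def IsSES {A B D : C} (f : A ⟶ B) (g : B ⟶ D) : Prop :=
  ∃ w : f ≫ g = 0, (ShortComplex.mk f g w).ShortExact

/-- A "subcategory" in the sense of the paper: a full additive subcategory, regarded as the
predicate of membership for its objects, closed under isomorphisms and direct summands. -/
structure IsSubcat (X : C → Prop) : Prop where
  zero : X 0
  iso_closed : ∀ {A B : C}, (A ≅ B) → X A → X B
  biprod_closed : ∀ {A B : C}, X A → X B → X (A ⊞ B)
  summand_closed : ∀ {A M : C} (i : A ⟶ M) (p : M ⟶ A), i ≫ p = 𝟙 A → X M → X A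

/-- `Hat X n M` means `M ∈ X̂ₙ`, i.e. there is an exact sequence
`0 → Xₙ → ⋯ → X₁ → X₀ → M → 0` with all `Xᵢ ∈ X`. -/
def Hat (X : C → Prop) : ℕ → C → Prop
  | 0, M => X M
  | (n + 1), M => ∃ (K E : C) (f : K ⟶ E) (g : E ⟶ M), IsSES f g ∧ X E ∧ Hat X n K

/-- `M ∈ X̂ = ⋃ₙ X̂ₙ`. -/
def HatAll (X : C → Prop) (M : C) : Prop := ∃ n, Hat X n M

/-- `W` is a cogenerator for `X`. -/
def IsCogenerator (W X : C → Prop) : Prop :=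
  (∀ M, W M → X M) ∧
    ∀ M, X M → ∃ (W₀ X' : C) (f : M ⟶ W₀) (g : W₀ ⟶ X'), IsSES f g ∧ W W₀ ∧ X X'

/-- `W` is a generator for `X`. -/
def IsGenerator (W X : C → Prop) : Prop :=
  (∀ M, W M → X M) ∧
    ∀ M, X M → ∃ (X' W₀ : C) (f : X' ⟶ W₀) (g : W₀ ⟶ M), IsSES f g ∧ W W₀ ∧ X X'

/-- `X` is closed under extensions. -/
def ExtClosed (X : C → Prop) : Prop :=
  ∀ ⦃A B D : C⦄ (f : A ⟶ B) (g : B ⟶ D), IsSES f g → X A → X D → X B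

/-- `X` is closed under kernels of epimorphisms. -/
def KerEpiClosed (X : C → Prop) : Prop :=
  ∀ ⦃A B D : C⦄ (f : A ⟶ B) (g : B ⟶ D), IsSES f g → X B → X D → X A

/-- A thick subcategory: closed under direct summands and two-out-of-three for
short exact sequences. -/
def IsThickSub (T : C → Prop) : Prop :=
  IsSubcat T ∧ ∀ ⦃A B D : C⦄ (f : A ⟶ B) (g : B ⟶ D), IsSES f g →
    (T A → T B → T D) ∧ (T A → T D → T B) ∧ (T B → T D → T A)

/-- Membership in `Thick(X)`, the smallest thick subcategory containing `X`. -/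
def thickClosure (X : C → Prop) (M : C) : Prop :=
  ∀ T : C → Prop, IsThickSub T → (∀ N, X N → T N) → T M

variable [HasExt.{w} C]

/-- `Y ∈ X^⊥`, i.e. `Extⁱ(M, Y) = 0` for all `i ≥ 1` and `M ∈ X`. -/
def rightPerp (X : C → Prop) (Y : C) : Prop :=
  ∀ M, X M → ∀ i : ℕ, 1 ≤ i → Subsingleton (Abelian.Ext M Y i)

/-- A left Frobenius pair `(X, W)`. -/
structure LeftFrobenius (X W : C → Prop) : Prop where
  subX : IsSubcat X
  subW : IsSubcat W
  extClosed : ExtClosed X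
  kerEpiClosed : KerEpiClosed X
  cogen : IsCogenerator W X
  perp : ∀ M, W M → rightPerp X M

/-- A strong left Frobenius pair `(X, W)`. -/
structure StrongLeftFrobenius (X W : C → Prop) extends LeftFrobenius X W : Prop where
  gen : IsGenerator W X
  proj : ∀ M N, W M → X N → ∀ i : ℕ, 1 ≤ i → Subsingleton (Abelian.Ext M N i)

/-- A cotorsion pair `(U, V)` on an extension-closed subcategory `B` of `C`. -/
structure CotorsionPairOn (B U V : C → Prop) : Prop where
  subU : ∀ M, U M → B M
  subV : ∀ M, V M → B M
  isoU : ∀ {A B' : C}, (A ≅ B') → U A → U B'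
  summandU : ∀ {A M : C} (i : A ⟶ M) (p : M ⟶ A), i ≫ p = 𝟙 A → U M → U A
  isoV : ∀ {A B' : C}, (A ≅ B') → V A → V B'
  summandV : ∀ {A M : C} (i : A ⟶ M) (p : M ⟶ A), i ≫ p = 𝟙 A → V M → V A
  ext1 : ∀ M N, U M → V N → Subsingleton (Abelian.Ext M N 1)
  res : ∀ M, B M → ∃ (V₀ U₀ : C) (f : V₀ ⟶ U₀) (g : U₀ ⟶ M), IsSES f g ∧ U U₀ ∧ V V₀
  cores : ∀ M, B M → ∃ (V₀ U₀ : C) (f : M ⟶ V₀) (g : V₀ ⟶ U₀), IsSES f g ∧ U U₀ ∧ V V₀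

/-- `NthSyzygy X n U M` means there is an exact sequence
`0 → U → Xₙ₋₁ → ⋯ → X₁ → X₀ → M → 0` with all `Xᵢ ∈ X` (for `n = 0`, `U ≅ M`). -/
def NthSyzygy (X : C → Prop) : ℕ → C → C → Prop
  | 0, U, M => Nonempty (U ≅ M)
  | (n + 1), U, M => ∃ (K E : C) (f : K ⟶ E) (g : E ⟶ M), IsSES f g ∧ X E ∧ NthSyzygy X n U K

end FrobeniusPaper

namespace FrobeniusPaper

variable {C : Type u} [Category.{v} C] [Abelian C]

/-! ### Short exact sequences, pullbacks and pushouts -/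

lemma isSES_of_lift {A B D : C} {f : A ⟶ B} {g : B ⟶ D} (w : f ≫ g = 0) (hf : Mono f) (hg : Epi g)
    (h : ∀ {T : C} (x : T ⟶ B), x ≫ g = 0 → ∃ y : T ⟶ A, y ≫ f = x) : IsSES f g := by
  refine ⟨w, ⟨?_⟩⟩
  rw [ShortComplex.exact_iff_exact_up_to_refinements]
  intro T x hx
  obtain ⟨y, hy⟩ := h x hx
  exact ⟨T, 𝟙 T, inferInstance, y, by simpa using hy.symm⟩

lemma isSES_of_desc {A B D : C} {f : A ⟶ B} {g : B ⟶ D} (w : f ≫ g = 0) (hf : Mono f) (hg : Epi g)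
    (h : ∀ {T : C} (x : B ⟶ T), f ≫ x = 0 → ∃ y : D ⟶ T, g ≫ y = x) : IsSES f g := by
  refine ⟨w, ⟨?_⟩⟩
  refine ShortComplex.exact_of_g_is_cokernel _ (CokernelCofork.IsColimit.ofπ' _ _ fun {T} x hx => ?_)
  exact ⟨(h x hx).choose, (h x hx).choose_spec⟩

namespace IsSES

variable {A B D : C} {f : A ⟶ B} {g : B ⟶ D}

lemma zero (h : IsSES f g) : f ≫ g = 0 := h.1

lemma mono (h : IsSES f g) : Mono f := h.2.mono_f

lemma epi (h : IsSES f g) : Epi g := h.2.epi_g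

lemma lift (h : IsSES f g) {T : C} (x : T ⟶ B) (hx : x ≫ g = 0) : ∃ y : T ⟶ A, y ≫ f = x :=
  have := h.mono
  ⟨_, h.2.exact.lift_f x hx⟩

lemma desc (h : IsSES f g) {T : C} (x : B ⟶ T) (hx : f ≫ x = 0) : ∃ y : D ⟶ T, g ≫ y = x :=
  have := h.epi
  ⟨_, h.2.exact.g_desc x hx⟩

/-- Pullback of two epimorphisms with the same target. -/
lemma pullback_epi {K E M L Y : C} {f : K ⟶ E} {g : E ⟶ M} {k : L ⟶ Y} {p : Y ⟶ M}
    (h₁ : IsSES f g) (h₂ : IsSES k p) :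
    ∃ (P : C) (a : K ⟶ P) (b : P ⟶ Y) (c : L ⟶ P) (d : P ⟶ E), IsSES a b ∧ IsSES c d := by
  have := h₁.mono
  have := h₁.epi
  have := h₂.mono
  have := h₂.epi
  refine ⟨pullback g p, pullback.lift f 0 (by simp [h₁.zero]), pullback.snd g p,
    pullback.lift 0 k (by simp [h₂.zero]), pullback.fst g p, ?_, ?_⟩
  · refine isSES_of_lift (pullback.lift_snd _ _ _)
      (mono_of_mono_fac (pullback.lift_fst _ _ _)) inferInstance fun x hx => ?_
    obtain ⟨y, hy⟩ := h₁.lift (x ≫ pullback.fst g p) (by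
      rw [Category.assoc, pullback.condition, reassoc_of% hx, zero_comp])
    exact ⟨y, pullback.hom_ext
      (by simpa [pullback.lift_fst, pullback.lift_snd] using hy)
      (by simpa [pullback.lift_fst, pullback.lift_snd] using hx.symm)⟩
  · refine isSES_of_lift (pullback.lift_fst _ _ _)
      (mono_of_mono_fac (pullback.lift_snd _ _ _)) inferInstance fun x hx => ?_
    obtain ⟨y, hy⟩ := h₂.lift (x ≫ pullback.snd g p) (by
      rw [Category.assoc, ← pullback.condition, reassoc_of% hx, zero_comp])
    exact ⟨y, pullback.hom_ext
      (by simpa [pullback.lift_fst, pullback.lift_snd] using hx.symm)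
      (by simpa [pullback.lift_fst, pullback.lift_snd] using hy)⟩

/-- Pullback of an epimorphism `g : E ⟶ M` along a monomorphism `i : N ⟶ M` with cokernel `D`. -/
lemma pullback_mono {K E M N D : C} {f : K ⟶ E} {g : E ⟶ M} {i : N ⟶ M} {p : M ⟶ D}
    (h₁ : IsSES f g) (h₂ : IsSES i p) :
    ∃ (P : C) (a : K ⟶ P) (b : P ⟶ N) (c : P ⟶ E) (d : E ⟶ D), IsSES a b ∧ IsSES c d := by
  have := h₁.mono
  have := h₁.epi
  have := h₂.mono
  have := h₂.epi
  refine ⟨pullback g i, pullback.lift f 0 (by simp [h₁.zero]), pullback.snd g i,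
    pullback.fst g i, g ≫ p, ?_, ?_⟩
  · refine isSES_of_lift (pullback.lift_snd _ _ _)
      (mono_of_mono_fac (pullback.lift_fst _ _ _)) inferInstance fun x hx => ?_
    obtain ⟨y, hy⟩ := h₁.lift (x ≫ pullback.fst g i) (by
      rw [Category.assoc, pullback.condition, reassoc_of% hx, zero_comp])
    exact ⟨y, pullback.hom_ext
      (by simpa [pullback.lift_fst, pullback.lift_snd] using hy)
      (by simpa [pullback.lift_fst, pullback.lift_snd] using hx.symm)⟩
  · refine isSES_of_lift (by rw [pullback.condition_assoc, h₂.zero, comp_zero])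
      inferInstance (epi_comp _ _) fun x hx => ?_
    obtain ⟨y, hy⟩ := h₂.lift (x ≫ g) (by simpa using hx)
    exact ⟨pullback.lift x y hy.symm, pullback.lift_fst _ _ _⟩

/-- Pushout of two monomorphisms with the same source. -/
lemma pushout_mono {K E M N D : C} {f : K ⟶ E} {g : E ⟶ M} {i : K ⟶ N} {p : N ⟶ D}
    (h₁ : IsSES f g) (h₂ : IsSES i p) :
    ∃ (P : C) (a : N ⟶ P) (b : P ⟶ M) (c : E ⟶ P) (d : P ⟶ D), IsSES a b ∧ IsSES c d := by
  have := h₁.mono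
  have := h₁.epi
  have := h₂.mono
  have := h₂.epi
  refine ⟨pushout f i, pushout.inr f i, pushout.desc g 0 (by simp [h₁.zero]),
    pushout.inl f i, pushout.desc 0 p (by simp [h₂.zero]), ?_, ?_⟩
  · refine isSES_of_desc (pushout.inr_desc _ _ _) inferInstance
      (epi_of_epi_fac (pushout.inl_desc _ _ _)) fun x hx => ?_
    obtain ⟨y, hy⟩ := h₁.desc (pushout.inl f i ≫ x) (by
      rw [pushout.condition_assoc, hx, comp_zero])
    exact ⟨y, pushout.hom_ext
      (by simpa [pushout.inl_desc_assoc, pushout.inr_desc_assoc] using hy)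
      (by simpa [pushout.inl_desc_assoc, pushout.inr_desc_assoc] using hx.symm)⟩
  · refine isSES_of_desc (pushout.inl_desc _ _ _) inferInstance
      (epi_of_epi_fac (pushout.inr_desc _ _ _)) fun x hx => ?_
    obtain ⟨y, hy⟩ := h₂.desc (pushout.inr f i ≫ x) (by
      rw [← pushout.condition_assoc, hx, comp_zero])
    exact ⟨y, pushout.hom_ext
      (by simpa [pushout.inl_desc_assoc, pushout.inr_desc_assoc] using hx.symm)
      (by simpa [pushout.inl_desc_assoc, pushout.inr_desc_assoc] using hy)⟩

/-- Pushout of a monomorphism `f : K ⟶ E` along an epimorphism `p : K ⟶ N` with kernel `L`. -/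
lemma pushout_epi {K E M L N : C} {f : K ⟶ E} {g : E ⟶ M} {i : L ⟶ K} {p : K ⟶ N}
    (h₁ : IsSES f g) (h₂ : IsSES i p) :
    ∃ (P : C) (a : N ⟶ P) (b : P ⟶ M) (c : L ⟶ E) (d : E ⟶ P), IsSES a b ∧ IsSES c d := by
  have := h₁.mono
  have := h₁.epi
  have := h₂.mono
  have := h₂.epi
  refine ⟨pushout f p, pushout.inr f p, pushout.desc g 0 (by simp [h₁.zero]),
    i ≫ f, pushout.inl f p, ?_, ?_⟩
  · refine isSES_of_desc (pushout.inr_desc _ _ _) inferInstance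
      (epi_of_epi_fac (pushout.inl_desc _ _ _)) fun x hx => ?_
    obtain ⟨y, hy⟩ := h₁.desc (pushout.inl f p ≫ x) (by
      rw [pushout.condition_assoc, hx, comp_zero])
    exact ⟨y, pushout.hom_ext
      (by simpa [pushout.inl_desc_assoc, pushout.inr_desc_assoc] using hy)
      (by simpa [pushout.inl_desc_assoc, pushout.inr_desc_assoc] using hx.symm)⟩
  · refine isSES_of_desc (by rw [Category.assoc, pushout.condition, ← Category.assoc, h₂.zero,
      zero_comp]) (mono_comp _ _) inferInstance fun x hx => ?_
    obtain ⟨y, hy⟩ := h₂.desc (f ≫ x) (by simpa using hx)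
    exact ⟨pushout.desc x y hy.symm, pushout.inl_desc _ _ _⟩

end IsSES

/-! ### Elementary properties of resolutions -/

lemma hat_succ {X : C → Prop} (h0 : X 0) : ∀ {n : ℕ} {M : C}, Hat X n M → Hat X (n + 1) M
  | 0, M, h => ⟨0, M, 0, 𝟙 M, isSES_of_lift (by simp) inferInstance inferInstance
      fun x hx => ⟨0, by simpa using hx.symm⟩, h, h0⟩
  | _ + 1, _, ⟨K, E, f, g, hfg, hE, hK⟩ => ⟨K, E, f, g, hfg, hE, hat_succ h0 hK⟩

lemma hat_mono {X : C → Prop} (h0 : X 0) {m n : ℕ} (hmn : m ≤ n) {M : C} (h : Hat X m M) :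
    Hat X n M := by
  induction hmn with
  | refl => exact h
  | step _ ih => exact hat_succ h0 ih

lemma hat_of_nthSyzygy {X : C → Prop} (hX : IsSubcat X) : ∀ {n : ℕ} {U M : C},
    NthSyzygy X n U M → X U → Hat X n M
  | 0, _, _, ⟨e⟩, hU => hX.iso_closed e hU
  | _ + 1, _, _, ⟨K, E, f, g, hfg, hE, hK⟩, hU => ⟨K, E, f, g, hfg, hE, hat_of_nthSyzygy hX hK hU⟩

lemma exists_nthSyzygy {X : C → Prop} {k : ℕ} : ∀ {n : ℕ} {M : C},
    Hat X (k + n) M → ∃ U, NthSyzygy X n U M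
  | 0, M, _ => ⟨M, ⟨Iso.refl M⟩⟩
  | _ + 1, _, ⟨K, E, f, g, hfg, hE, hK⟩ =>
    let ⟨U, hU⟩ := exists_nthSyzygy hK
    ⟨U, K, E, f, g, hfg, hE, hU⟩

/-- `X̂ₙ` is closed under kernels of epimorphisms onto objects of `X`. -/
lemma hat_ker_of_X {X : C → Prop} (hX : KerEpiClosed X) : ∀ {n : ℕ} {K P Y : C} {f : K ⟶ P}
    {g : P ⟶ Y}, IsSES f g → Hat X n P → X Y → Hat X n K
  | 0, _, _, _, f, g, h, hP, hY => hX f g h hP hY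
  | _ + 1, _, _, _, _, _, h, ⟨L, _, _, _, h', hE, hL⟩, hY =>
    let ⟨P', a, b, c, d, h₁, h₂⟩ := h'.pullback_mono h
    ⟨L, P', a, b, h₁, hX c d h₂ hE hY, hL⟩

/-- An extension of an object of `X̂ₙ` by a subobject in `X` is in `X̂ₙ`. -/
lemma hat_ext_of_X {X : C → Prop} (hX : ExtClosed X) : ∀ {n : ℕ} {E P Q : C} {f : E ⟶ P}
    {g : P ⟶ Q}, IsSES f g → X E → Hat X n Q → Hat X n P
  | 0, _, _, _, f, g, h, hE, hQ => hX f g h hE hQ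
  | _ + 1, _, _, _, _, _, h, hE, ⟨L, _, _, _, h', hY, hL⟩ =>
    let ⟨P', a, b, c, d, h₁, h₂⟩ := h'.pullback_epi h
    ⟨L, P', a, b, h₁, hX c d h₂ hE hY, hL⟩

lemma hat_of_imp {X W : C → Prop} (h : ∀ M, W M → X M) : ∀ {n : ℕ} {M : C}, Hat W n M → Hat X n M
  | 0, _, hM => h _ hM
  | _ + 1, _, ⟨K, E, f, g, hfg, hE, hK⟩ => ⟨K, E, f, g, hfg, h _ hE, hat_of_imp h hK⟩

/-! ### Auslander–Buchweitz approximation and vanishing of `Ext` -/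

/-- Every object of `X̂ₙ` embeds into an object of `Ŵₙ` with cokernel in `X`. -/
lemma exists_coapprox {X W : C → Prop} (hX : ExtClosed X) (hW : IsCogenerator W X) :
    ∀ {n : ℕ} {M : C}, Hat X n M →
      ∃ (Q X' : C) (f : M ⟶ Q) (g : Q ⟶ X'), IsSES f g ∧ Hat W n Q ∧ X X'
  | 0, M, h => hW.2 M h
  | _ + 1, _, ⟨_, _, _, _, h, hY, hL⟩ =>
    let ⟨Q, _, _, _, h', hQ, hX'⟩ := exists_coapprox hX hW hL
    let ⟨_, _, _, c, d, h₁, h₂⟩ := h.pushout_mono h'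
    let ⟨W₀, X'', _, _, h₃, hW₀, hX''⟩ := hW.2 _ (hX c d h₂ hY hX')
    let ⟨V, a, b, c', d', h₄, h₅⟩ := h₃.pushout_epi h₁
    ⟨V, X'', a, b, h₄, ⟨Q, W₀, c', d', h₅, hW₀, hQ⟩, hX''⟩

variable [HasExt.{w} C]

/-- Dimension shifting: `Ŵₙ ⊆ X^⊥` as soon as `W ⊆ X^⊥`. -/
lemma ext_vanish {X W : C → Prop} (hW : ∀ M, W M → rightPerp X M) :
    ∀ {n : ℕ} {Q : C}, Hat W n Q → rightPerp X Q
  | 0, Q, h => hW Q h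
  | _ + 1, _, ⟨K, E, _, _, ⟨_, h⟩, hE, hK⟩ => fun N hN i hi => by
    have := hW E hE N hN i hi
    have := ext_vanish hW hK N hN (i + 1) (by omega)
    refine subsingleton_of_forall_eq 0 fun x => ?_
    obtain ⟨y, rfl⟩ := Ext.covariant_sequence_exact₃ N h x rfl (Subsingleton.elim _ _)
    rw [Subsingleton.elim y 0, Ext.zero_comp]

/-- If `Ext¹(E, Q) = 0`, then an extension of `E` by `Q` is also an extension of `Q` by `E`. -/
lemma exists_swap {Q P E : C} {f : Q ⟶ P} {g : P ⟶ E} (h : IsSES f g)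
    (hext : Subsingleton (Ext E Q 1)) : ∃ (s : E ⟶ P) (r : P ⟶ Q), IsSES s r := by
  have := h.mono
  obtain ⟨y, hy⟩ := Ext.covariant_sequence_exact₃ E h.2 (Ext.mk₀ (𝟙 E)) (zero_add 1)
    (Subsingleton.elim _ _)
  obtain ⟨s, rfl⟩ := (Ext.mk₀_bijective _ _).2 y
  have hs : s ≫ g = 𝟙 E := (Ext.mk₀_bijective _ _).1 (by simpa using hy)
  obtain ⟨r, hr⟩ := h.lift (𝟙 P - g ≫ s) (by simp [hs])
  have hfr : f ≫ r = 𝟙 Q := by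
    rw [← cancel_mono f, Category.assoc, hr]
    simp [reassoc_of% h.zero]
  have hsr : s ≫ r = 0 := by
    rw [← cancel_mono f, Category.assoc, hr]
    simp [reassoc_of% hs]
  exact ⟨s, r, hsr, ShortComplex.Splitting.shortExact
    { r := g, s := f, f_r := hs, s_g := hfr, id := by simp [hr] }⟩

/-- If `0 → K → E → M → 0` is exact with `E ∈ X` and `M ∈ X̂ₙ₊₁`, then `K ∈ X̂ₙ`. -/
lemma hat_kernel {X W : C → Prop} (hF : LeftFrobenius X W) {n : ℕ} {K E M : C}
    {f : K ⟶ E} {g : E ⟶ M} (h : IsSES f g) (hE : X E) (hM : Hat X (n + 1) M) : Hat X n K := by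
  obtain ⟨L, Y, _, _, h', hY, hL⟩ := hM
  obtain ⟨Q, X', _, _, h₁, hQ, hX'⟩ := exists_coapprox hF.extClosed hF.cogen hL
  -- The pushout replaces the kernel `L` of `Y ⟶ M` by `Q ∈ Ŵₙ`.
  obtain ⟨Y', _, _, c, d, h₂, h₃⟩ := h'.pushout_mono h₁
  have hY' : X Y' := hF.extClosed c d h₃ hY hX'
  obtain ⟨P, _, _, _, _, h₄, h₅⟩ := h.pullback_epi h₂
  obtain ⟨_, _, h₆⟩ := exists_swap h₅ (ext_vanish hF.perp hQ E hE 1 le_rfl)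
  exact hat_ker_of_X hF.kerEpiClosed h₄
    (hat_ext_of_X hF.extClosed h₆ hE (hat_of_imp hF.cogen.1 hQ)) hY'

lemma nthSyzygy_mem {X W : C → Prop} (hF : LeftFrobenius X W) :
    ∀ {n : ℕ} {U M : C}, Hat X n M → NthSyzygy X n U M → X U
  | 0, _, _, hM, ⟨e⟩ => hF.subX.iso_closed e.symm hM
  | _ + 1, _, _, hM, ⟨_, _, _, _, h, hE, hU⟩ => nthSyzygy_mem hF (hat_kernel hF h hE hM) hU

/-- For a left Frobenius pair `(X, W)`, `C ∈ X̂` and `n ≥ 0`: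
`resdim_X(C) ≤ n` iff every `n`-th `X`-syzygy of `C` belongs to `X`. -/
theorem statement4 {C : Type u} [Category.{v} C] [Abelian C]
    [EnoughProjectives C] [EnoughInjectives C] [HasExt.{w} C]
    (X W : C → Prop) (hF : LeftFrobenius X W)
    (M : C) (hM : HatAll X M) (n : ℕ) :
    Hat X n M ↔ ∀ U : C, NthSyzygy X n U M → X U := by
  refine ⟨fun h U hU => nthSyzygy_mem hF h hU, fun h => ?_⟩
  obtain ⟨m, hm⟩ := hM
  rcases le_total m n with hmn | hnm
  · exact hat_mono hF.subX.zero hmn hm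
  · obtain ⟨k, rfl⟩ := Nat.exists_eq_add_of_le' hnm
    obtain ⟨U, hU⟩ := exists_nthSyzygy hm
    exact hat_of_nthSyzygy hF.subX hU (h U hU)

end FrobeniusPaper
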